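/- Let x : Fin 11 → ℝ^10 be a regular 11-simplex and let C2 be a clique of order 10 in the graph on Y1. Then the set Z = {u ∈ Y : ⟨u, w⟩ ∈ {α1, α2, α3} for every w ∈ C2} has exactly 90 elements. -/

import Mathlib

open RealInnerProductSpace

noncomputable section

/-- The three admissible inner product values (angles). -/
def α1 : ℝ := 4/15
def α2 : ℝ := -1/10
def α3 : ℝ := -7/15

/-- A regular 11-simplex in ℝ^10: eleven unit vectors with pairwise inner
products equal to -1/10. -/
def IsRegularSimplex (x : Fin 11 → EuclideanSpace ℝ (Fin 10)) : Prop :=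
  (∀ i, ‖x i‖ = 1) ∧ ∀ i j : Fin 11, i ≠ j → ⟪x i, x j⟫ = -1/10

/-- The set `Y1`: unit vectors `y` with `⟪x 0, y⟫ = α2` such that among the
indices `i ≠ 0`, exactly six satisfy `⟪x i, y⟫ = α1`, exactly one satisfies
`⟪x i, y⟫ = α2`, and exactly three satisfy `⟪x i, y⟫ = α3`. -/
def Y1set (x : Fin 11 → EuclideanSpace ℝ (Fin 10)) : Set (EuclideanSpace ℝ (Fin 10)) :=
  {y | ‖y‖ = 1 ∧ ⟪x 0, y⟫ = α2 ∧
    {i : Fin 11 | i ≠ 0 ∧ ⟪x i, y⟫ = α1}.ncard = 6 ∧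
    {i : Fin 11 | i ≠ 0 ∧ ⟪x i, y⟫ = α2}.ncard = 1 ∧
    {i : Fin 11 | i ≠ 0 ∧ ⟪x i, y⟫ = α3}.ncard = 3}

/-- A clique of order 10 in the graph on `Y1` in which two distinct vectors are
adjacent iff their inner product equals `α2`. -/
def IsClique10 (x : Fin 11 → EuclideanSpace ℝ (Fin 10))
    (D : Set (EuclideanSpace ℝ (Fin 10))) : Prop :=
  D ⊆ Y1set x ∧ D.ncard = 10 ∧
    ∀ y ∈ D, ∀ y' ∈ D, y ≠ y' → ⟪y, y'⟫ = α2

/-- The set `Y`: unit vectors `u ∉ C2` whose inner products with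
`x 0, …, x 10` take the value `α1` exactly six times, `α2` exactly twice, and
`α3` exactly three times. -/
def Yset (x : Fin 11 → EuclideanSpace ℝ (Fin 10))
    (C2 : Set (EuclideanSpace ℝ (Fin 10))) : Set (EuclideanSpace ℝ (Fin 10)) :=
  {u | ‖u‖ = 1 ∧ u ∉ C2 ∧
    {i : Fin 11 | ⟪x i, u⟫ = α1}.ncard = 6 ∧
    {i : Fin 11 | ⟪x i, u⟫ = α2}.ncard = 2 ∧
    {i : Fin 11 | ⟪x i, u⟫ = α3}.ncard = 3}

/-- The set `Z`: vectors of `Y` whose inner products with all vectors of `C2`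
lie in `{α1, α2, α3}`. -/
def Zset (x : Fin 11 → EuclideanSpace ℝ (Fin 10))
    (C2 : Set (EuclideanSpace ℝ (Fin 10))) : Set (EuclideanSpace ℝ (Fin 10)) :=
  {u ∈ Yset x C2 | ∀ w ∈ C2, ⟪u, w⟫ ∈ ({α1, α2, α3} : Set ℝ)}

/-!
Reading the angles `α1`, `α2`, `α3` as the signs `1`, `0`, `-1` identifies the vectors with six, two
and three inner products `α1`, `α2`, `α3` against the simplex with the sign vectors on `Fin 11`
having two zeros and three entries `-1`; inner products of such vectors are governed by inner
products of sign vectors, the angles corresponding to `3`, `0`, `-3`. The members of a clique have a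
zero at `0`. Their other entries are ten pairwise orthogonal sign vectors on `Fin 10`, with one zero
each, so they form the rows of a conference matrix; counting entries, orthogonality says precisely
that these are the rows of the Seidel matrix of a strongly regular graph `G` with parameters
`(10, 3, 0, 1)`, such as the Petersen graph.

It remains to count the sign vectors `s` whose inner products with all Seidel rows are `3`, `0` or
`-3`. Here `s 0 = 0` is impossible, and the other two cases are governed by the `10 * 3 * 4 = 120`
quadruples `(p, q, u, w)` for which `pq` and `uw` are edges of `G` with no edge between them.
* If `s 0 = -1`, the zeros of `s` form such an edge `uw` and its remaining entries `-1` form `pq`;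
  each `s` arises from 4 quadruples.
* If `s 0 = 1`, the entries `-1` of `s` are at `p`, `q`, `u` and its zeros at the two neighbours of
  `w` other than `u`; each `s` arises from 2 quadruples.

So the number of solutions is `120 / 4 + 120 / 2 = 90`.
-/

section SignVectors

open Finset

variable {ι : Type*} [Fintype ι]

/-- The vector `s` of signs has `z` entries `0` and `n` entries `-1`; all others are `1`. -/
def HasSignCounts (s : ι → SignType) (z n : ℕ) : Prop :=
  #{i | s i = 0} = z ∧ #{i | s i = -1} = n

lemma coe_sign_eq (a : SignType) :
    (a : ℤ) = 1 - (if a = 0 then 1 else 0) - 2 * (if a = -1 then 1 else 0) := by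
  cases a <;> decide

lemma sum_coe_sign_eq {ι : Type*} (A : Finset ι) (s : ι → SignType) :
    ∑ i ∈ A, (s i : ℤ) = #A - #{i ∈ A | s i = 0} - 2 * #{i ∈ A | s i = -1} := by
  simp only [coe_sign_eq, sum_sub_distrib, ← mul_sum, sum_boole, sum_const, nsmul_eq_mul, mul_one]

lemma HasSignCounts.sum_eq {s : ι → SignType} {z n : ℕ} (hs : HasSignCounts s z n) :
    ∑ i, (s i : ℤ) = Fintype.card ι - z - 2 * n := by
  rw [sum_coe_sign_eq, hs.1, hs.2, card_univ]

lemma HasSignCounts.sum_mul_self {s : ι → SignType} {z n : ℕ} (hs : HasSignCounts s z n) :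
    ∑ i, (s i : ℤ) * s i = Fintype.card ι - z := by
  have hsq (a : SignType) : (a : ℤ) * a = 1 - if a = 0 then 1 else 0 := by cases a <;> decide
  simp only [hsq, sum_sub_distrib, sum_boole, hs.1, sum_const, card_univ, nsmul_eq_mul, mul_one]

lemma HasSignCounts.card_eq_one {s : ι → SignType} {z n : ℕ} (hs : HasSignCounts s z n) :
    #{i | s i = 1} + z + n = Fintype.card ι := by
  have h := card_eq_sum_card_fiberwise (s := univ) (t := univ) (f := s) (by simp)
  rw [SignType.univ_eq, sum_insert (by decide), sum_pair (by decide), hs.1, hs.2, card_univ] at h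
  lia

lemma hasSignCounts_cons_zero {m z n : ℕ} {s : Fin m → SignType} :
    HasSignCounts (Fin.cons 0 s : Fin (m + 1) → SignType) (z + 1) n ↔ HasSignCounts s z n := by
  simp [HasSignCounts, Fin.card_filter_univ_succ]

lemma hasSignCounts_cons_one {m z n : ℕ} {s : Fin m → SignType} :
    HasSignCounts (Fin.cons 1 s : Fin (m + 1) → SignType) z n ↔ HasSignCounts s z n := by
  simp [HasSignCounts, Fin.card_filter_univ_succ]

lemma hasSignCounts_cons_neg_one {m z n : ℕ} {s : Fin m → SignType} :
    HasSignCounts (Fin.cons (-1) s : Fin (m + 1) → SignType) z (n + 1) ↔ HasSignCounts s z n := by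
  simp [HasSignCounts, Fin.card_filter_univ_succ]

section SignVector

variable [DecidableEq ι] {Z M Z' M' : Finset ι}

/-- The sign vector with zeros on `Z`, entries `-1` on `M` (outside `Z`) and `1` elsewhere. -/
def signVector (Z M : Finset ι) : ι → SignType := fun j =>
  if j ∈ Z then 0 else if j ∈ M then -1 else 1

omit [Fintype ι] in
lemma signVector_eq_zero_iff {j : ι} : signVector Z M j = 0 ↔ j ∈ Z := by
  unfold signVector
  split_ifs <;> simp_all

omit [Fintype ι] in
lemma signVector_eq_neg_one_iff (h : Disjoint Z M) {j : ι} : signVector Z M j = -1 ↔ j ∈ M := by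
  have hj : j ∈ Z → j ∉ M := fun hZ => disjoint_left.1 h hZ
  unfold signVector
  split_ifs <;> simp_all

omit [Fintype ι] in
lemma signVector_inj (h : Disjoint Z M) (h' : Disjoint Z' M') :
    signVector Z M = signVector Z' M' ↔ Z = Z' ∧ M = M' := by
  refine ⟨fun heq => ⟨?_, ?_⟩, fun ⟨hZ, hM⟩ => by rw [hZ, hM]⟩
  · ext j
    rw [← signVector_eq_zero_iff (M := M), heq, signVector_eq_zero_iff]
  · ext j
    rw [← signVector_eq_neg_one_iff h, heq, signVector_eq_neg_one_iff h']

lemma hasSignCounts_signVector (h : Disjoint Z M) : HasSignCounts (signVector Z M) #Z #M := by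
  simp [HasSignCounts, signVector_eq_zero_iff, signVector_eq_neg_one_iff h]

lemma HasSignCounts.exists_signVector_eq {s : ι → SignType} {z n : ℕ} (hs : HasSignCounts s z n) :
    ∃ Z M : Finset ι, Disjoint Z M ∧ #Z = z ∧ #M = n ∧ signVector Z M = s := by
  refine ⟨_, _, disjoint_filter.2 fun j _ h0 h1 => ?_, hs.1, hs.2, ?_⟩
  · simp [h0] at h1
  · ext j
    simp only [signVector, mem_filter, mem_univ, true_and]
    rcases SignType.trichotomy (s j) with h | h | h <;> simp [h]

lemma sum_signVector_mul_signVector_singleton (h : Disjoint Z M) {k : ι} {N : Finset ι}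
    (hk : k ∉ N) : ∑ j, (signVector Z M j : ℤ) * signVector {k} N j =
      Fintype.card ι - #Z - 2 * #M - 2 * #N - signVector Z M k +
        2 * (#{j ∈ Z | j ∈ N} + 2 * #{j ∈ M | j ∈ N}) := by
  have hentry (j : ι) : (signVector Z M j : ℤ) * signVector {k} N j = signVector Z M j -
      (if j = k then (signVector Z M j : ℤ) else 0) -
        2 * (if j ∈ N then (signVector Z M j : ℤ) else 0) := by
    have hsingleton : (signVector {k} N j : ℤ) =
        1 - (if j = k then 1 else 0) - 2 * if j ∈ N then 1 else 0 := by
      unfold signVector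
      split_ifs <;> simp_all
    rw [hsingleton]
    split_ifs <;> ring
  have hcomm (A : Finset ι) : #{j ∈ N | j ∈ A} = #{j ∈ A | j ∈ N} := by
    rw [filter_mem_eq_inter, filter_mem_eq_inter, inter_comm]
  simp only [hentry, sum_sub_distrib, sum_ite_eq', mem_univ, if_true, ← mul_sum, sum_ite_mem,
    univ_inter, (hasSignCounts_signVector h).sum_eq, sum_coe_sign_eq, signVector_eq_zero_iff,
    signVector_eq_neg_one_iff h, hcomm]
  ring

end SignVector

end SignVectors

section StronglyRegular

open Finset

variable {V : Type*} {G : SimpleGraph V}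

/-- The edges `pq` and `uw` of `G` form an induced matching: no further two of the four vertices are
adjacent. -/
structure IsFarEdgePair (G : SimpleGraph V) (p q u w : V) : Prop where
  adj_left : G.Adj p q
  adj_right : G.Adj u w
  not_adj_pu : ¬ G.Adj p u
  not_adj_pw : ¬ G.Adj p w
  not_adj_qu : ¬ G.Adj q u
  not_adj_qw : ¬ G.Adj q w

namespace IsFarEdgePair

variable {p q u w : V}

lemma symm (h : IsFarEdgePair G p q u w) : IsFarEdgePair G u w p q :=
  ⟨h.adj_right, h.adj_left, mt .symm h.not_adj_pu, mt .symm h.not_adj_qu, mt .symm h.not_adj_pw,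
    mt .symm h.not_adj_qw⟩

lemma swap_left (h : IsFarEdgePair G p q u w) : IsFarEdgePair G q p u w :=
  ⟨h.adj_left.symm, h.adj_right, h.not_adj_qu, h.not_adj_qw, h.not_adj_pu, h.not_adj_pw⟩

lemma swap_right (h : IsFarEdgePair G p q u w) : IsFarEdgePair G p q w u :=
  h.symm.swap_left.symm

lemma ne (h : IsFarEdgePair G p q u w) : p ≠ u := by
  rintro rfl
  exact h.not_adj_pw h.adj_right

lemma disjoint [DecidableEq V] (h : IsFarEdgePair G p q u w) :
    Disjoint ({u, w} : Finset V) {p, q} := by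
  simp [h.ne, h.swap_left.ne, h.swap_right.ne, h.swap_left.swap_right.ne]

lemma not_adj_or_adj (h : IsFarEdgePair G p q u w) {k : V} (hk : k = u ∨ k = w) :
    ¬ (G.Adj k p ∨ G.Adj k q) := by
  obtain ⟨-, -, hup, huq, hwp, hwq⟩ := h.symm
  rcases hk with rfl | rfl
  exacts [not_or.2 ⟨hup, huq⟩, not_or.2 ⟨hwp, hwq⟩]

end IsFarEdgePair

variable [Fintype V] [DecidableRel G.Adj] {n k l μ : ℕ}

lemma not_adj_of_isSRGWith_zero (hG : G.IsSRGWith n k 0 μ) {u v w : V} (huv : G.Adj u v)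
    (huw : G.Adj u w) : ¬ G.Adj v w := fun hvw =>
  (Fintype.card_eq_zero_iff.1 (hG.of_adj u v huv)).false ⟨w, huw, hvw⟩

lemma exists_common_neighbor (hG : G.IsSRGWith n k l 1) {u v : V} (huv : u ≠ v)
    (hadj : ¬ G.Adj u v) : ∃ w, G.Adj u w ∧ G.Adj v w := by
  obtain ⟨⟨w, hw⟩, -⟩ := Fintype.card_eq_one_iff.1 (hG.of_not_adj huv hadj)
  exact ⟨w, hw⟩

lemma eq_of_common_neighbor (hG : G.IsSRGWith n k 0 1) {u v w w' : V} (huv : u ≠ v)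
    (hu : G.Adj u w) (hv : G.Adj v w) (hu' : G.Adj u w') (hv' : G.Adj v w') : w = w' := by
  have hadj : ¬ G.Adj u v := not_adj_of_isSRGWith_zero hG hu.symm hv.symm
  have hcard := Fintype.card_le_one_iff_subsingleton.1 (hG.of_not_adj huv hadj).le
  exact congrArg Subtype.val <| hcard.elim ⟨w, hu, hv⟩ ⟨w', hu', hv'⟩

lemma adj_iff_of_three_neighbors (hG : G.IsRegularOfDegree 3) {v a b c : V} (ha : G.Adj v a)
    (hb : G.Adj v b) (hc : G.Adj v c) (hab : a ≠ b) (hac : a ≠ c) (hbc : b ≠ c) (w : V) :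
    G.Adj v w ↔ w = a ∨ w = b ∨ w = c := by
  classical
  have hN : {a, b, c} = G.neighborFinset v := by
    refine eq_of_subset_of_card_le (by simp [insert_subset_iff, ha, hb, hc]) ?_
    rw [G.card_neighborFinset_eq_degree, hG v, card_eq_three.2 ⟨a, b, c, hab, hac, hbc, rfl⟩]
  rw [← G.mem_neighborFinset, ← hN, mem_insert, mem_insert, mem_singleton]

lemma IsFarEdgePair.adj_or_adj (hG : G.IsSRGWith n 3 0 1) {p q u w v : V}
    (h : IsFarEdgePair G p q u w) (hv : G.Adj v p) (hvq : v ≠ q) : G.Adj v u ∨ G.Adj v w := by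
  obtain ⟨c, hpc, huc⟩ := exists_common_neighbor hG h.ne h.not_adj_pu
  obtain ⟨d, hpd, hwd⟩ := exists_common_neighbor hG h.swap_right.ne h.not_adj_pw
  have hcd : c ≠ d := by
    rintro rfl
    exact not_adj_of_isSRGWith_zero hG h.adj_right huc hwd
  have hqc : q ≠ c := by
    rintro rfl
    exact h.not_adj_qu huc.symm
  have hqd : q ≠ d := by
    rintro rfl
    exact h.not_adj_qw hwd.symm
  have hN := adj_iff_of_three_neighbors hG.regular h.adj_left hpc hpd hqc hqd hcd v
  rcases (hN.1 hv.symm).resolve_left hvq with rfl | rfl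
  · exact .inl huc.symm
  · exact .inr hwd.symm

lemma IsFarEdgePair.adj_or_adj_iff (hG : G.IsSRGWith n 3 0 1) {p q u w v : V}
    (h : IsFarEdgePair G p q u w) (hp : v ≠ p) (hq : v ≠ q) (hu : v ≠ u) (hw : v ≠ w) :
    G.Adj v p ∨ G.Adj v q ↔ G.Adj v u ∨ G.Adj v w :=
  ⟨fun hv => hv.elim (h.adj_or_adj hG · hq) (h.swap_left.adj_or_adj hG · hp),
    fun hv => hv.elim (h.symm.adj_or_adj hG · hw) (h.swap_right.symm.adj_or_adj hG · hu)⟩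

lemma existsUnique_isFarEdgePair (hG : G.IsSRGWith n 3 0 1) {p q r : V} (hpq : G.Adj p q)
    (hpr : ¬ G.Adj p r) (hqr : ¬ G.Adj q r) : ∃! m, IsFarEdgePair G p q r m := by
  classical
  have hpr' : p ≠ r := by
    rintro rfl
    exact hqr hpq.symm
  have hqr' : q ≠ r := by
    rintro rfl
    exact hpr hpq
  obtain ⟨c, hpc, hrc⟩ := exists_common_neighbor hG hpr' hpr
  obtain ⟨d, hqd, hrd⟩ := exists_common_neighbor hG hqr' hqr
  have hcd : c ≠ d := by
    rintro rfl
    exact not_adj_of_isSRGWith_zero hG hpq hpc hqd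
  have hfar (m : V) : IsFarEdgePair G p q r m ↔ m ∈ G.neighborFinset r \ {c, d} := by
    simp only [mem_sdiff, G.mem_neighborFinset, mem_insert, mem_singleton, not_or]
    constructor
    · intro h
      exact ⟨h.adj_right, fun hm => h.not_adj_pw (hm ▸ hpc), fun hm => h.not_adj_qw (hm ▸ hqd)⟩
    · rintro ⟨hm, hmc, hmd⟩
      exact ⟨hpq, hm, hpr, fun h => hmc (eq_of_common_neighbor hG hpr' h hm hpc hrc), hqr,
        fun h => hmd (eq_of_common_neighbor hG hqr' h hm hqd hrd)⟩
  simp only [hfar]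
  rw [← card_eq_one_iff_existsUnique, card_sdiff_of_subset (by simp [insert_subset_iff, hrc, hrd]),
    G.card_neighborFinset_eq_degree, hG.regular r, card_pair hcd]

lemma card_compl_union_neighborFinset [DecidableEq V] (hG : G.IsSRGWith n k 0 μ) {p q : V}
    (hpq : G.Adj p q) : #(G.neighborFinset p ∪ G.neighborFinset q)ᶜ = n - 2 * k := by
  have hdisj : Disjoint (G.neighborFinset p) (G.neighborFinset q) := by
    rw [disjoint_left]
    intro v hp hq
    rw [G.mem_neighborFinset] at hp hq
    exact not_adj_of_isSRGWith_zero hG hpq hp hq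
  rw [card_compl, hG.card, card_union_of_disjoint hdisj, G.card_neighborFinset_eq_degree,
    G.card_neighborFinset_eq_degree, hG.regular p, hG.regular q, two_mul]

open scoped Classical in
/-- The finite set of all far edge pairs of `G`, with ordered and oriented edges. -/
def farEdgePairs (G : SimpleGraph V) : Finset (V × V × V × V) :=
  {e | IsFarEdgePair G e.1 e.2.1 e.2.2.1 e.2.2.2}

omit [DecidableRel G.Adj] in
lemma mem_farEdgePairs {p q u w : V} :
    (p, q, u, w) ∈ farEdgePairs G ↔ IsFarEdgePair G p q u w := by
  simp [farEdgePairs]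

lemma card_farEdgePairs (hG : G.IsSRGWith n 3 0 1) :
    #(farEdgePairs G) = n * (3 * (n - 2 * 3)) := by
  classical
  let farTriples : Finset (Σ _ : V, Σ _ : V, V) :=
    univ.sigma fun p => (G.neighborFinset p).sigma fun q =>
      (G.neighborFinset p ∪ G.neighborFinset q)ᶜ
  have hmem (p q r : V) : ⟨p, q, r⟩ ∈ farTriples ↔ G.Adj p q ∧ ¬ G.Adj p r ∧ ¬ G.Adj q r := by
    simp [farTriples]
  have hcard : #farTriples = n * (3 * (n - 2 * 3)) := by
    have hnbr (p : V) : ∑ q ∈ G.neighborFinset p, #(G.neighborFinset p ∪ G.neighborFinset q)ᶜ =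
        3 * (n - 2 * 3) := by
      rw [sum_congr rfl fun q hq =>
          card_compl_union_neighborFinset hG ((G.mem_neighborFinset p q).1 hq),
        sum_const, G.card_neighborFinset_eq_degree, hG.regular p, smul_eq_mul]
    simp only [farTriples, card_sigma, hnbr, sum_const, card_univ, hG.card, smul_eq_mul]
  rw [← hcard]
  refine card_nbij (fun e => ⟨e.1, e.2.1, e.2.2.1⟩) ?_ ?_ ?_
  · rintro ⟨p, q, u, w⟩ he
    have h := mem_farEdgePairs.1 he
    exact (hmem p q u).2 ⟨h.adj_left, h.not_adj_pu, h.not_adj_qu⟩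
  · rintro ⟨p, q, u, w⟩ he ⟨p', q', u', w'⟩ he' heq
    obtain ⟨rfl, rfl, rfl⟩ : p = p' ∧ q = q' ∧ u = u' := by simpa using heq
    have h := mem_farEdgePairs.1 he
    have hw := (existsUnique_isFarEdgePair hG h.adj_left h.not_adj_pu h.not_adj_qu).unique h
      (mem_farEdgePairs.1 he')
    rw [hw]
  · rintro ⟨p, q, r⟩ ht
    obtain ⟨hpq, hpr, hqr⟩ := (hmem p q r).1 ht
    obtain ⟨m, hm, -⟩ := existsUnique_isFarEdgePair hG hpq hpr hqr
    exact ⟨(p, q, r, m), mem_farEdgePairs.2 hm, rfl⟩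

lemma card_filter_adj_neighborFinset (hG : G.IsSRGWith n k l 1) {u v : V} (huv : u ≠ v)
    (hadj : ¬ G.Adj u v) : #{j ∈ G.neighborFinset v | G.Adj u j} = 1 := by
  classical
  rw [← hG.of_not_adj huv hadj, ← Set.toFinset_card]
  congr 1
  ext j
  simp [G.mem_commonNeighbors, and_comm]

lemma card_filter_adj_neighborFinset_of_adj (hG : G.IsSRGWith n k 0 μ) {u v : V}
    (hadj : G.Adj u v) : #{j ∈ G.neighborFinset v | G.Adj u j} = 0 := by
  rw [card_eq_zero, filter_eq_empty_iff]
  intro j hj huj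
  exact not_adj_of_isSRGWith_zero hG hadj huj ((G.mem_neighborFinset v j).1 hj)

lemma card_filter_adj_edge [DecidableEq V] (hG : G.IsSRGWith n k 0 μ) {p q : V} (hpq : G.Adj p q)
    (v : V) : #{j ∈ ({p, q} : Finset V) | G.Adj v j} = if G.Adj v p ∨ G.Adj v q then 1 else 0 := by
  have hnot : ¬ (G.Adj v p ∧ G.Adj v q) := fun h => not_adj_of_isSRGWith_zero hG h.1 h.2 hpq
  rw [card_filter, sum_pair hpq.ne]
  split_ifs <;> simp_all

end StronglyRegular

section Seidel

open Finset

variable {V : Type*} [Fintype V]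

/-- A sign vector on `V` is admissible for a set `D` of sign vectors if its inner products with all
members of `D` are `3`, `0` or `-3`; these values correspond to the angles `α1`, `α2` and `α3`. -/
def IsAdmissible (D : Set (V → SignType)) (r : V → SignType) : Prop :=
  ∀ t ∈ D, ∑ j, (r j : ℤ) * t j ∈ ({3, 0, -3} : Set ℤ)

variable [DecidableEq V] {G : SimpleGraph V} [DecidableRel G.Adj]

/-- The row at `k` of the Seidel adjacency matrix of `G`, with entries `0` on the diagonal, `-1` for
adjacent and `1` for non-adjacent vertices. -/
def seidelRow (G : SimpleGraph V) [DecidableRel G.Adj] (k : V) : V → SignType :=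
  signVector {k} (G.neighborFinset k)

/-- The sum of `1 - r j` over the neighbours `j` of `k`, for the sign vector `r = signVector Z M`
with disjoint `Z` and `M`. -/
def neighborDefect (G : SimpleGraph V) [DecidableRel G.Adj] (Z M : Finset V) (k : V) : ℕ :=
  #{j ∈ Z | G.Adj k j} + 2 * #{j ∈ M | G.Adj k j}

lemma sum_signVector_mul_seidelRow {Z M : Finset V} (h : Disjoint Z M) (k : V) :
    ∑ j, (signVector Z M j : ℤ) * seidelRow G k j = Fintype.card V - #Z - 2 * #M - 2 * G.degree k -
      signVector Z M k + 2 * neighborDefect G Z M k := by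
  rw [seidelRow, sum_signVector_mul_signVector_singleton h (G.notMem_neighborFinset_self k),
    G.card_neighborFinset_eq_degree]
  simp only [G.mem_neighborFinset, neighborDefect]
  push_cast
  ring

lemma isAdmissible_signVector_iff (hG : G.IsSRGWith 10 3 0 1) {Z M : Finset V}
    (h : Disjoint Z M) : IsAdmissible (Set.range (seidelRow G)) (signVector Z M) ↔
      ∀ k, (4 - #Z - 2 * #M - signVector Z M k + 2 * neighborDefect G Z M k : ℤ) ∈
        ({3, 0, -3} : Set ℤ) := by
  have hinner (k : V) : ∑ j, (signVector Z M j : ℤ) * seidelRow G k j =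
      4 - #Z - 2 * #M - signVector Z M k + 2 * neighborDefect G Z M k := by
    rw [sum_signVector_mul_seidelRow h, hG.regular k, hG.card]
    push_cast
    ring
  simp only [IsAdmissible, Set.forall_mem_range, hinner]

lemma isAdmissible_signVector_two_two_iff (hG : G.IsSRGWith 10 3 0 1) {Z M : Finset V}
    (h : Disjoint Z M) (hZ : #Z = 2) (hM : #M = 2) :
    IsAdmissible (Set.range (seidelRow G)) (signVector Z M) ↔
      ∀ k, (k ∈ Z → neighborDefect G Z M k = 1) ∧ (k ∈ M → neighborDefect G Z M k = 2) ∧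
        (k ∉ Z → k ∉ M → neighborDefect G Z M k = 0 ∨ neighborDefect G Z M k = 3) := by
  simp only [isAdmissible_signVector_iff hG h, hZ, hM, Set.mem_insert_iff, Set.mem_singleton_iff,
    ← signVector_eq_zero_iff (Z := Z) (M := M), ← signVector_eq_neg_one_iff h]
  refine forall_congr' fun k => ?_
  rcases SignType.trichotomy (signVector Z M k) with h | h | h <;> simp [h] <;> omega

lemma isAdmissible_signVector_two_three_iff (hG : G.IsSRGWith 10 3 0 1) {Z M : Finset V}
    (h : Disjoint Z M) (hZ : #Z = 2) (hM : #M = 3) :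
    IsAdmissible (Set.range (seidelRow G)) (signVector Z M) ↔
      ∀ k, (k ∈ Z → neighborDefect G Z M k = 2) ∧
        (k ∈ M → neighborDefect G Z M k = 0 ∨ neighborDefect G Z M k = 3) ∧
        (k ∉ Z → k ∉ M → neighborDefect G Z M k = 1 ∨ neighborDefect G Z M k = 4) := by
  simp only [isAdmissible_signVector_iff hG h, hZ, hM, Set.mem_insert_iff, Set.mem_singleton_iff,
    ← signVector_eq_zero_iff (Z := Z) (M := M), ← signVector_eq_neg_one_iff h]
  refine forall_congr' fun k => ?_
  rcases SignType.trichotomy (signVector Z M k) with h | h | h <;> simp [h] <;> omega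

lemma not_isAdmissible_of_one_three (hG : G.IsSRGWith 10 3 0 1) {r : V → SignType}
    (hr : HasSignCounts r 1 3) : ¬ IsAdmissible (Set.range (seidelRow G)) r := by
  intro hadm
  obtain ⟨Z, M, hdisj, hZ, hM, rfl⟩ := hr.exists_signVector_eq
  obtain ⟨o, rfl⟩ := card_eq_one.1 hZ
  simp only [isAdmissible_signVector_iff hG hdisj, neighborDefect, hZ, hM, Set.mem_insert_iff,
    Set.mem_singleton_iff] at hadm
  have hadj : ∀ p ∈ M, G.Adj o p := by
    intro p hp
    by_contra hop
    have hp' := hadm p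
    rw [(signVector_eq_neg_one_iff hdisj).2 hp, filter_singleton,
      if_neg (mt SimpleGraph.Adj.symm hop), card_empty, SignType.coe_neg_one] at hp'
    omega
  have ho := hadm o
  rw [signVector_eq_zero_iff.2 (mem_singleton_self o), filter_true_of_mem hadj, hM,
    SignType.coe_zero] at ho
  omega

lemma isAdmissible_signVector_of_isFarEdgePair (hG : G.IsSRGWith 10 3 0 1) {p q u w : V}
    (h : IsFarEdgePair G p q u w) :
    IsAdmissible (Set.range (seidelRow G)) (signVector {u, w} {p, q}) := by
  rw [isAdmissible_signVector_two_two_iff hG h.disjoint (card_pair h.adj_right.ne)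
    (card_pair h.adj_left.ne)]
  intro k
  simp only [neighborDefect, card_filter_adj_edge hG h.adj_left, mem_insert, mem_singleton,
    card_filter_adj_edge hG h.adj_right, not_or]
  have hself {a b : V} (hab : G.Adj a b) (hk : k = a ∨ k = b) : G.Adj k a ∨ G.Adj k b :=
    hk.elim (fun hka => .inr (hka ▸ hab)) fun hkb => .inl (hkb ▸ hab.symm)
  refine ⟨fun hk => ?_, fun hk => ?_, fun hkZ hkM => ?_⟩
  · rw [if_pos (hself h.adj_right hk), if_neg (h.not_adj_or_adj hk)]
  · rw [if_pos (hself h.adj_left hk), if_neg (h.symm.not_adj_or_adj hk)]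
  · simp only [h.adj_or_adj_iff hG hkM.1 hkM.2 hkZ.1 hkZ.2]
    split_ifs <;> simp

lemma exists_isFarEdgePair_of_isAdmissible (hG : G.IsSRGWith 10 3 0 1) {s : V → SignType}
    (hs : HasSignCounts s 2 2) (hadm : IsAdmissible (Set.range (seidelRow G)) s) :
    ∃ p q u w, IsFarEdgePair G p q u w ∧ signVector {u, w} {p, q} = s := by
  obtain ⟨Z, M, hdisj, hZ, hM, rfl⟩ := hs.exists_signVector_eq
  rw [isAdmissible_signVector_two_two_iff hG hdisj hZ hM] at hadm
  obtain ⟨u, w, huw, rfl⟩ := card_eq_two.1 hZ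
  obtain ⟨p, q, hpq, rfl⟩ := card_eq_two.1 hM
  simp only [neighborDefect, card_filter, sum_pair huw, sum_pair hpq] at hadm
  obtain ⟨huw', hup, huq⟩ : G.Adj u w ∧ ¬ G.Adj u p ∧ ¬ G.Adj u q := by
    have hdefect := (hadm u).1 (by simp)
    grind [G.irrefl]
  obtain ⟨hwp, hwq⟩ : ¬ G.Adj w p ∧ ¬ G.Adj w q := by
    have hdefect := (hadm w).1 (by simp)
    grind
  have hpq' : G.Adj p q := by
    have hdefect := (hadm p).2.1 (by simp)
    grind [G.irrefl, G.adj_comm]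
  exact ⟨p, q, u, w, IsFarEdgePair.symm ⟨huw', hpq', hup, huq, hwp, hwq⟩, rfl⟩

lemma setOf_isAdmissible_two_two (hG : G.IsSRGWith 10 3 0 1) :
    {s | HasSignCounts s 2 2 ∧ IsAdmissible (Set.range (seidelRow G)) s} =
      (fun e : V × V × V × V => signVector {e.2.2.1, e.2.2.2} {e.1, e.2.1}) '' farEdgePairs G := by
  ext s
  constructor
  · rintro ⟨hs, hadm⟩
    obtain ⟨p, q, u, w, h, rfl⟩ := exists_isFarEdgePair_of_isAdmissible hG hs hadm
    exact ⟨(p, q, u, w), mem_farEdgePairs.2 h, rfl⟩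
  · rintro ⟨⟨p, q, u, w⟩, he, rfl⟩
    have h := mem_farEdgePairs.1 he
    refine ⟨?_, isAdmissible_signVector_of_isFarEdgePair hG h⟩
    simpa only [card_pair h.adj_left.ne, card_pair h.adj_right.ne] using
      hasSignCounts_signVector h.disjoint

namespace IsFarEdgePair

variable {p q r m : V}

lemma disjoint_erase_neighborFinset (h : IsFarEdgePair G p q r m) :
    Disjoint ((G.neighborFinset m).erase r) {p, q, r} := by
  rw [disjoint_right]
  intro j hj
  rw [mem_insert, mem_insert, mem_singleton] at hj
  rw [mem_erase, G.mem_neighborFinset, G.adj_comm]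
  rcases hj with rfl | rfl | rfl
  exacts [fun hj => h.not_adj_pw hj.2, fun hj => h.not_adj_qw hj.2, fun hj => hj.1 rfl]

lemma card_erase_neighborFinset (hG : G.IsRegularOfDegree 3) (h : IsFarEdgePair G p q r m) :
    #((G.neighborFinset m).erase r) = 2 := by
  rw [card_erase_of_mem ((G.mem_neighborFinset m r).2 h.adj_right.symm),
    G.card_neighborFinset_eq_degree, hG m]

omit [Fintype V] [DecidableRel G.Adj] in
lemma card_triple (h : IsFarEdgePair G p q r m) : #({p, q, r} : Finset V) = 3 :=
  card_eq_three.2 ⟨p, q, r, h.adj_left.ne, h.ne, h.swap_left.ne, rfl⟩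

lemma neighborDefect_erase_neighborFinset (hG : G.IsSRGWith 10 3 0 1)
    (h : IsFarEdgePair G p q r m) (k : V) :
    neighborDefect G ((G.neighborFinset m).erase r) {p, q, r} k =
      #{j ∈ G.neighborFinset m | G.Adj k j} + (if G.Adj k r then 1 else 0) +
        2 * if G.Adj k p ∨ G.Adj k q then 1 else 0 := by
  have hM : #{j ∈ ({p, q, r} : Finset V) | G.Adj k j} =
      (if G.Adj k p ∨ G.Adj k q then 1 else 0) + if G.Adj k r then 1 else 0 := by
    rw [← card_filter_adj_edge hG h.adj_left, card_filter, card_filter, sum_pair h.adj_left.ne,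
      sum_insert (by simp [h.adj_left.ne, h.ne]), sum_pair h.swap_left.ne, add_assoc]
  have hZ : #{j ∈ (G.neighborFinset m).erase r | G.Adj k j} + (if G.Adj k r then 1 else 0) =
      #{j ∈ G.neighborFinset m | G.Adj k j} := by
    rw [card_filter, card_filter,
      sum_erase_add _ _ ((G.mem_neighborFinset m r).2 h.adj_right.symm)]
  rw [neighborDefect, hM, ← hZ]
  ring

end IsFarEdgePair

lemma isAdmissible_signVector_erase_of_isFarEdgePair (hG : G.IsSRGWith 10 3 0 1) {p q r m : V}
    (h : IsFarEdgePair G p q r m) :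
    IsAdmissible (Set.range (seidelRow G))
      (signVector ((G.neighborFinset m).erase r) {p, q, r}) := by
  rw [isAdmissible_signVector_two_three_iff hG h.disjoint_erase_neighborFinset
    (h.card_erase_neighborFinset hG.regular) h.card_triple]
  intro k
  simp only [h.neighborDefect_erase_neighborFinset hG, mem_insert, mem_singleton, not_or]
  refine ⟨fun hk => ?_, fun hk => ?_, fun hkZ ⟨hkp, hkq, hkr⟩ => ?_⟩
  · have hkM := disjoint_left.1 h.disjoint_erase_neighborFinset hk
    simp only [mem_insert, mem_singleton, not_or] at hkM
    have hmk : G.Adj m k := (G.mem_neighborFinset m k).1 (mem_of_mem_erase hk)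
    have hkr : ¬ G.Adj k r := not_adj_of_isSRGWith_zero hG hmk h.adj_right.symm
    have hkpq : G.Adj k p ∨ G.Adj k q :=
      (h.adj_or_adj_iff hG hkM.1 hkM.2.1 hkM.2.2 hmk.ne.symm).2 (.inr hmk.symm)
    rw [card_filter_adj_neighborFinset_of_adj hG hmk.symm, if_neg hkr, if_pos hkpq]
  · rcases hk with rfl | rfl | rfl
    · simp [card_filter_adj_neighborFinset hG h.swap_right.ne h.not_adj_pw, h.not_adj_pu,
        h.adj_left]
    · simp [card_filter_adj_neighborFinset hG h.swap_left.swap_right.ne h.not_adj_qw,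
        h.not_adj_qu, h.adj_left.symm]
    · simp [card_filter_adj_neighborFinset_of_adj hG h.adj_right, h.not_adj_or_adj (.inl rfl)]
  · rcases eq_or_ne k m with rfl | hkm
    · rw [filter_true_of_mem fun j hj => (G.mem_neighborFinset k j).1 hj,
        G.card_neighborFinset_eq_degree, hG.regular k]
      simp [h.adj_right.symm, h.not_adj_or_adj (.inr rfl)]
    · have hadj : ¬ G.Adj k m := fun hadj =>
        hkZ (mem_erase.2 ⟨hkr, (G.mem_neighborFinset m k).2 hadj.symm⟩)
      simp only [card_filter_adj_neighborFinset hG hkm hadj,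
        h.adj_or_adj_iff hG hkp hkq hkr hkm, hadj, or_false]
      split_ifs <;> simp

lemma exists_common_neighbor_of_isAdmissible (hG : G.IsSRGWith 10 3 0 1) {u w : V} {M : Finset V}
    (hdisj : Disjoint {u, w} M) (huw : u ≠ w) (hM : #M = 3)
    (hadm : IsAdmissible (Set.range (seidelRow G)) (signVector {u, w} M)) :
    ∃ m, G.Adj m u ∧ G.Adj m w ∧ #{j ∈ M | G.Adj m j} = 1 ∧ #{j ∈ M | G.Adj u j} = 1 := by
  simp only [isAdmissible_signVector_two_three_iff hG hdisj (card_pair huw) hM, neighborDefect,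
    card_filter _ ({u, w} : Finset V), sum_pair huw] at hadm
  have hu := (hadm u).1 (by simp)
  have huw' : ¬ G.Adj u w := by
    intro h
    simp only [G.irrefl, if_false, h, if_true] at hu
    omega
  simp only [G.irrefl, huw', if_false] at hu
  obtain ⟨m, hum, hwm⟩ := exists_common_neighbor hG huw huw'
  refine ⟨m, hum.symm, hwm.symm, ?_, by omega⟩
  obtain ⟨-, hmem, hnot⟩ := hadm m
  simp only [hum.symm, hwm.symm, if_true] at hmem hnot
  by_cases hmM : m ∈ M
  · have := hmem hmM
    omega
  · have := hnot (by simp [hum.ne.symm, hwm.ne.symm]) hmM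
    omega

lemma exists_isFarEdgePair_subset_of_isAdmissible (hG : G.IsSRGWith 10 3 0 1) {u w : V}
    {M : Finset V} (hdisj : Disjoint {u, w} M) (huw : u ≠ w) (hM : #M = 3)
    (hadm : IsAdmissible (Set.range (seidelRow G)) (signVector {u, w} M)) :
    ∃ p q r m, IsFarEdgePair G p q r m ∧ {p, q, r} ⊆ M ∧ {u, w} ⊆ G.neighborFinset m := by
  obtain ⟨m, hmu, hmw, hm, hu⟩ := exists_common_neighbor_of_isAdmissible hG hdisj huw hM hadm
  simp only [isAdmissible_signVector_two_three_iff hG hdisj (card_pair huw) hM, neighborDefect,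
    card_filter _ ({u, w} : Finset V), sum_pair huw] at hadm
  obtain ⟨r, hr⟩ := card_eq_one.1 hm
  have hmM (j : V) : j ∈ M ∧ G.Adj m j ↔ j = r := by simpa using congrArg (j ∈ ·) hr
  obtain ⟨hrM, hmr⟩ := (hmM r).2 rfl
  have hru : ¬ G.Adj r u := not_adj_of_isSRGWith_zero hG hmr hmu
  have hrw : ¬ G.Adj r w := not_adj_of_isSRGWith_zero hG hmr hmw
  have hr_far : ∀ j ∈ M, ¬ G.Adj r j := by
    have hdefect := (hadm r).2.1 hrM
    simp only [hru, hrw, if_false] at hdefect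
    have hcard : #{j ∈ M | G.Adj r j} = 0 := by omega
    exact filter_eq_empty_iff.1 (card_eq_zero.1 hcard)
  obtain ⟨p, hp⟩ := card_pos.1 (hu.ge : 0 < _)
  obtain ⟨hpM, hup⟩ := mem_filter.1 hp
  obtain ⟨q, hq⟩ : ({j ∈ M | G.Adj p j} : Finset V).Nonempty := by
    have hdefect := (hadm p).2.1 hpM
    simp only [hup.symm, if_true] at hdefect
    rw [← card_pos]
    split_ifs at hdefect <;> omega
  obtain ⟨hqM, hpq⟩ := mem_filter.1 hq
  have hrp := hr_far p hpM
  have hrq := hr_far q hqM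
  have hmp : ¬ G.Adj m p := fun h => hru ((hmM p).1 ⟨hpM, h⟩ ▸ hup.symm)
  have hmq : ¬ G.Adj m q := fun h => hrp ((hmM q).1 ⟨hqM, h⟩ ▸ hpq.symm)
  exact ⟨p, q, r, m, IsFarEdgePair.symm ⟨hmr.symm, hpq, hrp, hrq, hmp, hmq⟩,
    by simp [insert_subset_iff, hpM, hqM, hrM], by simp [insert_subset_iff, hmu, hmw]⟩

lemma exists_isFarEdgePair_erase_of_isAdmissible (hG : G.IsSRGWith 10 3 0 1) {s : V → SignType}
    (hs : HasSignCounts s 2 3) (hadm : IsAdmissible (Set.range (seidelRow G)) s) :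
    ∃ p q r m, IsFarEdgePair G p q r m ∧
      signVector ((G.neighborFinset m).erase r) {p, q, r} = s := by
  obtain ⟨Z, M, hdisj, hZ, hM, rfl⟩ := hs.exists_signVector_eq
  obtain ⟨u, w, huw, rfl⟩ := card_eq_two.1 hZ
  obtain ⟨p, q, r, m, hfar, hsub, huwm⟩ :=
    exists_isFarEdgePair_subset_of_isAdmissible hG hdisj huw hM hadm
  obtain rfl : {p, q, r} = M :=
    eq_of_subset_of_card_le hsub (hfar.card_triple.trans hM.symm).ge
  have hr : r ∉ ({u, w} : Finset V) := disjoint_right.1 hdisj (by simp)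
  have huwZ : {u, w} = (G.neighborFinset m).erase r :=
    eq_of_subset_of_card_le (subset_erase.2 ⟨huwm, hr⟩)
      ((hfar.card_erase_neighborFinset hG.regular).trans hZ.symm).le
  exact ⟨p, q, r, m, hfar, by rw [huwZ]⟩

lemma setOf_isAdmissible_two_three (hG : G.IsSRGWith 10 3 0 1) :
    {s | HasSignCounts s 2 3 ∧ IsAdmissible (Set.range (seidelRow G)) s} =
      (fun e : V × V × V × V =>
        signVector ((G.neighborFinset e.2.2.2).erase e.2.2.1) {e.1, e.2.1, e.2.2.1}) ''
          farEdgePairs G := by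
  ext s
  constructor
  · rintro ⟨hs, hadm⟩
    obtain ⟨p, q, r, m, h, rfl⟩ := exists_isFarEdgePair_erase_of_isAdmissible hG hs hadm
    exact ⟨(p, q, r, m), mem_farEdgePairs.2 h, rfl⟩
  · rintro ⟨⟨p, q, r, m⟩, he, rfl⟩
    have h := mem_farEdgePairs.1 he
    refine ⟨?_, isAdmissible_signVector_erase_of_isFarEdgePair hG h⟩
    simpa only [h.card_erase_neighborFinset hG.regular, h.card_triple] using
      hasSignCounts_signVector h.disjoint_erase_neighborFinset

omit [DecidableEq V] in
lemma card_image_farEdgePairs_mul {α : Type*} [DecidableEq α] (hG : G.IsSRGWith 10 3 0 1)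
    (f : V × V × V × V → α) {c : ℕ}
    (hf : ∀ e ∈ farEdgePairs G, #{e' ∈ farEdgePairs G | f e' = f e} = c) :
    #((farEdgePairs G).image f) * c = 120 := by
  calc #((farEdgePairs G).image f) * c
    _ = ∑ a ∈ (farEdgePairs G).image f, #{e ∈ farEdgePairs G | f e = a} := by
      rw [sum_const_nat]
      exact forall_mem_image.2 hf
    _ = #(farEdgePairs G) := (card_eq_sum_card_image f _).symm
    _ = 120 := card_farEdgePairs hG

namespace IsFarEdgePair

omit [Fintype V] [DecidableRel G.Adj] in
lemma signVector_eq_iff {p q u w p' q' u' w' : V} (h : IsFarEdgePair G p q u w)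
    (h' : IsFarEdgePair G p' q' u' w') :
    signVector {u', w'} {p', q'} = signVector {u, w} {p, q} ↔
      (u' = u ∧ w' = w ∨ u' = w ∧ w' = u) ∧ (p' = p ∧ q' = q ∨ p' = q ∧ q' = p) := by
  simp only [signVector_inj h'.disjoint h.disjoint, ← coe_inj, coe_pair, Set.pair_eq_pair_iff]

lemma signVector_erase_eq_iff (hG : G.IsSRGWith 10 3 0 1) {p q r m p' q' r' m' : V}
    (h : IsFarEdgePair G p q r m) (h' : IsFarEdgePair G p' q' r' m') :
    signVector ((G.neighborFinset m').erase r') {p', q', r'} =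
        signVector ((G.neighborFinset m).erase r) {p, q, r} ↔
      (p' = p ∧ q' = q ∨ p' = q ∧ q' = p) ∧ r' = r ∧ m' = m := by
  rw [signVector_inj h'.disjoint_erase_neighborFinset h.disjoint_erase_neighborFinset]
  constructor
  · rintro ⟨hZ, hM⟩
    obtain ⟨u, w, huw, hZuw⟩ := card_eq_two.1 (h.card_erase_neighborFinset hG.regular)
    have hZ' := hZ.trans hZuw
    simp only [Finset.ext_iff, mem_insert, mem_singleton, mem_erase, G.mem_neighborFinset]
      at hM hZ' hZuw
    obtain rfl : m' = m :=
      eq_of_common_neighbor hG huw ((hZ' u).2 (.inl rfl)).2.symm ((hZ' w).2 (.inr rfl)).2.symm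
        ((hZuw u).2 (.inl rfl)).2.symm ((hZuw w).2 (.inr rfl)).2.symm
    have hr' := (hM r').1 (by simp)
    have hp' := (hM p').1 (by simp)
    have hq' := (hM q').1 (by simp)
    have hrm' := h'.adj_right
    have hpm := h.not_adj_pw
    have hqm := h.not_adj_qw
    have hpq' := h'.adj_left.ne
    have hpr' := h'.ne
    have hqr' := h'.swap_left.ne
    obtain rfl : r' = r := by
      rcases hr' with rfl | rfl | rfl
      exacts [absurd hrm' hpm, absurd hrm' hqm, rfl]
    grind
  · rintro ⟨⟨rfl, rfl⟩ | ⟨rfl, rfl⟩, rfl, rfl⟩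
    exacts [⟨rfl, rfl⟩, ⟨rfl, insert_comm _ _ _⟩]

end IsFarEdgePair

lemma ncard_setOf_isAdmissible_two_two (hG : G.IsSRGWith 10 3 0 1) :
    {s | HasSignCounts s 2 2 ∧ IsAdmissible (Set.range (seidelRow G)) s}.ncard = 30 := by
  have hmul := card_image_farEdgePairs_mul (c := 4) hG
    (fun e => signVector {e.2.2.1, e.2.2.2} {e.1, e.2.1}) <| by
      rintro ⟨p, q, u, w⟩ he
      have h := mem_farEdgePairs.1 he
      have hfiber : ({e' ∈ farEdgePairs G | signVector {e'.2.2.1, e'.2.2.2} {e'.1, e'.2.1} =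
          signVector {u, w} {p, q}} : Finset _) =
            {(p, q, u, w), (q, p, u, w), (p, q, w, u), (q, p, w, u)} := by
        ext ⟨p', q', u', w'⟩
        simp only [mem_filter, mem_farEdgePairs, mem_insert, mem_singleton, Prod.mk.injEq]
        constructor
        · rintro ⟨h', hs⟩
          have := (h.signVector_eq_iff h').1 hs
          tauto
        · rintro (⟨rfl, rfl, rfl, rfl⟩ | ⟨rfl, rfl, rfl, rfl⟩ | ⟨rfl, rfl, rfl, rfl⟩ |
            ⟨rfl, rfl, rfl, rfl⟩)
          · exact ⟨h, rfl⟩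
          · exact ⟨h.swap_left, (h.signVector_eq_iff h.swap_left).2 (by simp)⟩
          · exact ⟨h.swap_right, (h.signVector_eq_iff h.swap_right).2 (by simp)⟩
          · have h' := h.swap_left.swap_right
            exact ⟨h', (h.signVector_eq_iff h').2 (by simp)⟩
      rw [hfiber]
      simp [h.adj_left.ne, h.adj_right.ne]
  rw [setOf_isAdmissible_two_two hG, ← coe_image, Set.ncard_coe_finset]
  omega

lemma ncard_setOf_isAdmissible_two_three (hG : G.IsSRGWith 10 3 0 1) :
    {s | HasSignCounts s 2 3 ∧ IsAdmissible (Set.range (seidelRow G)) s}.ncard = 60 := by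
  have hmul := card_image_farEdgePairs_mul (c := 2) hG (fun e =>
    signVector ((G.neighborFinset e.2.2.2).erase e.2.2.1) {e.1, e.2.1, e.2.2.1}) <| by
      rintro ⟨p, q, r, m⟩ he
      have h := mem_farEdgePairs.1 he
      refine card_eq_two.2 ⟨(p, q, r, m), (q, p, r, m), by simp [h.adj_left.ne], ?_⟩
      ext ⟨p', q', r', m'⟩
      simp only [mem_filter, mem_farEdgePairs, mem_insert, mem_singleton, Prod.mk.injEq]
      constructor
      · rintro ⟨h', hs⟩
        have := (h.signVector_erase_eq_iff hG h').1 hs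
        tauto
      · rintro (⟨rfl, rfl, rfl, rfl⟩ | ⟨rfl, rfl, rfl, rfl⟩)
        · exact ⟨h, rfl⟩
        · exact ⟨h.swap_left, (h.signVector_erase_eq_iff hG h.swap_left).2 (by simp)⟩
  rw [setOf_isAdmissible_two_three hG, ← coe_image, Set.ncard_coe_finset]
  omega

end Seidel

section Orthogonal

open Finset

variable {V : Type*} [Fintype V] [DecidableEq V] {D : Set (V → SignType)}

lemma sum_signVector_mul_eq_zero_iff (hV : Fintype.card V = 10) {k l : V} {N N' : Finset V}
    (hk : k ∉ N) (hl : l ∉ N') (hN : #N = 3) (hN' : #N' = 3) :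
    ∑ j, (signVector {l} N' j : ℤ) * signVector {k} N j = 0 ↔
      k ≠ l ∧ (k ∈ N' ↔ l ∈ N) ∧ #{j ∈ N' | j ∈ N} = if l ∈ N then 0 else 1 := by
  rw [sum_signVector_mul_signVector_singleton (disjoint_singleton_left.2 hl) hk, hV, hN, hN',
    card_singleton, filter_singleton]
  by_cases hkl : k = l
  · subst hkl
    simp [signVector, hk]
    omega
  · rw [signVector, if_neg (by simpa using hkl)]
    generalize #{j ∈ N' | j ∈ N} = m
    by_cases hkN' : k ∈ N' <;> by_cases hlN : l ∈ N <;> simp [hkl, hkN', hlN] <;> omega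

lemma exists_eq_range_signVector (hV : Fintype.card V = 10) (hD : ∀ s ∈ D, HasSignCounts s 1 3)
    (horth : D.Pairwise fun s t => ∑ j, (s j : ℤ) * t j = 0) (hcard : D.ncard = 10) :
    ∃ N : V → Finset V, (∀ k, k ∉ N k ∧ #(N k) = 3) ∧
      D = Set.range fun k => signVector {k} (N k) := by
  have hform (s : D) : ∃ k N, k ∉ N ∧ #N = 3 ∧ signVector {k} N = s.1 := by
    obtain ⟨Z, N, hdisj, hZ, hN, hs⟩ := (hD s s.2).exists_signVector_eq
    obtain ⟨k, rfl⟩ := card_eq_one.1 hZ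
    exact ⟨k, N, disjoint_singleton_left.1 hdisj, hN, hs⟩
  choose zero N hzero hN hs using hform
  have hinj : Function.Injective zero := by
    intro s t hst
    by_contra hne
    have h := horth s.2 t.2 (Subtype.coe_ne_coe.2 hne)
    rw [← hs s, ← hs t,
      sum_signVector_mul_eq_zero_iff hV (hzero t) (hzero s) (hN t) (hN s)] at h
    exact h.1 hst.symm
  have hbij : Function.Bijective zero :=
    hinj.bijective_of_nat_card_le
      (by rw [Nat.card_eq_fintype_card, hV, Nat.card_coe_set_eq, hcard])
  let e := Equiv.ofBijective zero hbij
  have he (k : V) : zero (e.symm k) = k := e.apply_symm_apply k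
  have hrow (k : V) : signVector {k} (N (e.symm k)) = e.symm k := by rw [← hs, he]
  refine ⟨fun k => N (e.symm k), fun k => ⟨?_, hN _⟩, ?_⟩
  · simpa only [he] using hzero (e.symm k)
  · simp only [hrow]
    exact (e.symm.surjective.range_comp Subtype.val).symm ▸ Subtype.range_coe.symm

lemma exists_isSRGWith_eq_range_seidelRow (hV : Fintype.card V = 10)
    (hD : ∀ s ∈ D, HasSignCounts s 1 3)
    (horth : D.Pairwise fun s t => ∑ j, (s j : ℤ) * t j = 0) (hcard : D.ncard = 10) :
    ∃ (G : SimpleGraph V) (_ : DecidableRel G.Adj),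
      G.IsSRGWith 10 3 0 1 ∧ D = Set.range (seidelRow G) := by
  obtain ⟨N, hN, rfl⟩ := exists_eq_range_signVector hV hD horth hcard
  have hcond {k l : V} (hkl : k ≠ l) :
      (k ∈ N l ↔ l ∈ N k) ∧ #{j ∈ N l | j ∈ N k} = if l ∈ N k then 0 else 1 := by
    have hne : signVector {l} (N l) ≠ signVector {k} (N k) := by
      rw [Ne, signVector_inj (by simpa using (hN l).1) (by simpa using (hN k).1)]
      exact fun h => hkl (singleton_injective h.1).symm
    exact ((sum_signVector_mul_eq_zero_iff hV (hN k).1 (hN l).1 (hN k).2 (hN l).2).1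
      (horth ⟨l, rfl⟩ ⟨k, rfl⟩ hne)).2
  let G : SimpleGraph V :=
    { Adj k l := l ∈ N k
      symm := ⟨fun k l hkl => (hcond (ne_of_mem_of_not_mem hkl (hN k).1).symm).1.2 hkl⟩
      loopless := ⟨fun k => (hN k).1⟩ }
  let _ : DecidableRel G.Adj := fun k l => inferInstanceAs (Decidable (l ∈ N k))
  have hnbr (k : V) : G.neighborFinset k = N k := by
    ext l
    exact G.mem_neighborFinset k l
  have hcommon {k l : V} (hkl : k ≠ l) :
      Fintype.card (G.commonNeighbors k l) = if G.Adj k l then 0 else 1 := by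
    rw [← (hcond hkl).2, ← Set.toFinset_card]
    congr 1
    ext j
    simp [G.mem_commonNeighbors, G, and_comm]
  refine ⟨G, inferInstance, ⟨hV, fun k => ?_, fun k l hkl => ?_, fun k l hkl hadj => ?_⟩, ?_⟩
  · rw [← G.card_neighborFinset_eq_degree, hnbr, (hN k).2]
  · rw [hcommon hkl.ne, if_pos hkl]
  · rw [hcommon hkl, if_neg hadj]
  · exact congrArg Set.range (funext fun k => by rw [seidelRow, hnbr])

end Orthogonal

section Count

variable {D : Set (Fin 10 → SignType)}

lemma setOf_isAdmissible_tail (hD : ∀ r, HasSignCounts r 1 3 → ¬ IsAdmissible D r) :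
    {s : Fin 11 → SignType | HasSignCounts s 2 3 ∧ IsAdmissible D (Fin.tail s)} =
      Fin.cons (-1) '' {r | HasSignCounts r 2 2 ∧ IsAdmissible D r} ∪
        Fin.cons 1 '' {r | HasSignCounts r 2 3 ∧ IsAdmissible D r} := by
  ext s
  obtain ⟨a, r, rfl⟩ : ∃ a r, s = Fin.cons a r := ⟨s 0, Fin.tail s, (Fin.cons_self_tail s).symm⟩
  rcases SignType.trichotomy a with rfl | rfl | rfl
  · simp [hasSignCounts_cons_neg_one]
  · simpa [hasSignCounts_cons_zero] using hD r
  · simp [hasSignCounts_cons_one]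

lemma ncard_setOf_isAdmissible_tail (hD : ∀ s ∈ D, HasSignCounts s 1 3)
    (horth : D.Pairwise fun s t => ∑ j, (s j : ℤ) * t j = 0) (hcard : D.ncard = 10) :
    {s : Fin 11 → SignType | HasSignCounts s 2 3 ∧ IsAdmissible D (Fin.tail s)}.ncard = 90 := by
  obtain ⟨G, _, hG, rfl⟩ := exists_isSRGWith_eq_range_seidelRow (Fintype.card_fin 10) hD horth hcard
  have hdisj : Disjoint
      (Fin.cons (-1) '' {r | HasSignCounts r 2 2 ∧ IsAdmissible (Set.range (seidelRow G)) r} :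
        Set (Fin 11 → SignType))
      (Fin.cons 1 '' {r | HasSignCounts r 2 3 ∧ IsAdmissible (Set.range (seidelRow G)) r}) := by
    rw [Set.disjoint_left]
    rintro _ ⟨r, -, rfl⟩ ⟨r', -, h⟩
    exact absurd (congrFun h 0) (by simp)
  rw [setOf_isAdmissible_tail fun r => not_isAdmissible_of_one_three hG,
    Set.ncard_union_eq hdisj, Set.ncard_image_of_injective _ (Fin.cons_right_injective _),
    Set.ncard_image_of_injective _ (Fin.cons_right_injective _),
    ncard_setOf_isAdmissible_two_two hG, ncard_setOf_isAdmissible_two_three hG]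

end Count

section Simplex

open Module

variable {E ι : Type*} [NormedAddCommGroup E] [InnerProductSpace ℝ E] {x : ι → E} {a b : ℝ}

/-- The vectors of the family `x` have the same norm and the same pairwise inner products, with
Gram matrix entries `a` on and `b` off the diagonal. -/
structure IsEquiangularFamily (x : ι → E) (a b : ℝ) : Prop where
  inner_self (i : ι) : ⟪x i, x i⟫ = a
  inner_of_ne : Pairwise fun i j => ⟪x i, x j⟫ = b

namespace IsEquiangularFamily

lemma inner_sum_smul [DecidableEq ι] (hx : IsEquiangularFamily x a b) (A : Finset ι) (c : ι → ℝ)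
    (i : ι) :
    ⟪x i, ∑ j ∈ A, c j • x j⟫ = (if i ∈ A then (a - b) * c i else 0) + b * ∑ j ∈ A, c j := by
  have hgram (j : ι) : c j * ⟪x i, x j⟫ = (if i = j then (a - b) * c j else 0) + b * c j := by
    split_ifs with h
    · rw [← h, hx.inner_self]
      ring
    · rw [hx.inner_of_ne h]
      ring
  simp only [inner_sum, real_inner_smul_right, hgram, Finset.sum_add_distrib, Finset.sum_ite_eq,
    Finset.mul_sum]

lemma linearIndepOn_finset (hx : IsEquiangularFamily x a b) (hab : a ≠ b) {A : Finset ι} {i₀ : ι}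
    (hi₀ : i₀ ∉ A) : LinearIndepOn ℝ x (A : Set ι) := by
  classical
  rw [linearIndepOn_finset_iff]
  intro c hc i hi
  have hinner (i : ι) : (if i ∈ A then (a - b) * c i else 0) + b * ∑ j ∈ A, c j = 0 := by
    rw [← hx.inner_sum_smul, hc, inner_zero_right]
  have hsum : b * ∑ j ∈ A, c j = 0 := by simpa [hi₀] using hinner i₀
  simpa [hi, hsum, sub_ne_zero.2 hab] using hinner i

variable [Fintype ι]

lemma inner_sum_smul_sum_smul (hx : IsEquiangularFamily x a b) (c d : ι → ℝ) :
    ⟪∑ i, c i • x i, ∑ i, d i • x i⟫ =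
      (a - b) * ∑ i, c i * d i + b * ((∑ i, c i) * ∑ i, d i) := by
  classical
  simp only [sum_inner, real_inner_smul_left, hx.inner_sum_smul, Finset.mem_univ, if_true, mul_add,
    Finset.sum_add_distrib, mul_left_comm _ b, mul_left_comm _ (a - b), ← Finset.mul_sum,
    ← Finset.sum_mul]

lemma span_range_eq_top [FiniteDimensional ℝ E] (hx : IsEquiangularFamily x a b) (hab : a ≠ b)
    (hcard : Fintype.card ι = finrank ℝ E + 1) : Submodule.span ℝ (Set.range x) = ⊤ := by
  classical
  obtain ⟨i₀⟩ : Nonempty ι := Fintype.card_pos_iff.1 (by lia)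
  have hli := hx.linearIndepOn_finset hab (Finset.notMem_erase i₀ Finset.univ)
  have htop := hli.linearIndependent.span_eq_top_of_card_eq_finrank' <| by
    simp [hcard]
  exact top_le_iff.1 (htop ▸ Submodule.span_mono (Set.range_comp_subset_range _ x))

lemma ext_inner [FiniteDimensional ℝ E] (hx : IsEquiangularFamily x a b) (hab : a ≠ b)
    (hcard : Fintype.card ι = finrank ℝ E + 1) {y z : E} (h : ∀ i, ⟪x i, y⟫ = ⟪x i, z⟫) :
    y = z := by
  have hinner : innerₗ E y = innerₗ E z :=
    LinearMap.ext_on_range (hx.span_range_eq_top hab hcard) fun i => by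
      simpa only [innerₗ_apply_apply, real_inner_comm] using h i
  exact ext_inner_right ℝ fun v => LinearMap.congr_fun hinner v

end IsEquiangularFamily

lemma exists_comp_eq_of_sum_ncard_eq {α κ : Type*} [Fintype ι] [Fintype κ] {f : ι → α} {g : κ → α}
    (hg : Function.Injective g) (h : ∑ k, {i | f i = g k}.ncard = Fintype.card ι) :
    ∃ s, g ∘ s = f := by
  have hinj : Function.Injective fun p : Σ k, {i | f i = g k} => (p.2 : ι) := by
    rintro ⟨k, i, hi⟩ ⟨k', i', hi'⟩ heq
    obtain rfl : i = i' := heq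
    obtain rfl : k = k' := hg (hi.symm.trans hi')
    rfl
  have hbij := hinj.bijective_of_nat_card_le <| by
    rw [Nat.card_sigma, Nat.card_eq_fintype_card, ← h]
    exact le_rfl
  choose p hp using hbij.2
  exact ⟨fun i => (p i).1, funext fun i => (p i).2.2.symm.trans (congrArg f (hp i))⟩

lemma ncard_setOf_comp_eq {α κ : Type*} [Fintype ι] [DecidableEq κ] {g : κ → α}
    (hg : Function.Injective g) (s : ι → κ) (k : κ) :
    {i | g (s i) = g k}.ncard = Finset.card {i | s i = k} := by
  simp only [hg.eq_iff]
  rw [Set.ncard_eq_toFinset_card', Set.toFinset_ofPred]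

end Simplex

section Angles

/-- The angle `α1`, `α2` or `α3` encoded by the sign `1`, `0` or `-1`. -/
def signAngle (σ : SignType) : ℝ := 11 / 30 * σ - 1 / 10

lemma signAngle_one : signAngle 1 = α1 := by norm_num [signAngle, α1]

lemma signAngle_zero : signAngle 0 = α2 := by norm_num [signAngle, α2]

lemma signAngle_neg_one : signAngle (-1) = α3 := by norm_num [signAngle, α3]

lemma signAngle_injective : Function.Injective signAngle := by
  intro σ τ h
  cases σ <;> cases τ <;> first | rfl | norm_num [signAngle] at h

variable {x : Fin 11 → EuclideanSpace ℝ (Fin 10)} {s t : Fin 11 → SignType}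
  {y : EuclideanSpace ℝ (Fin 10)} {D : Set (Fin 10 → SignType)}

/-- The vector encoded by the sign vector `s`, scaled so that it has norm `1` and inner products
`signAngle (s i)` with the simplex `x` if `s` has two entries `0` and three entries `-1`. -/
def simplexVector (x : Fin 11 → EuclideanSpace ℝ (Fin 10)) (s : Fin 11 → SignType) :
    EuclideanSpace ℝ (Fin 10) :=
  (1 / 3 : ℝ) • ∑ i, (s i : ℝ) • x i

lemma HasSignCounts.sum_eq_three (hs : HasSignCounts s 2 3) : ∑ i, (s i : ℝ) = 3 := by
  have h : ((∑ i, (s i : ℤ) : ℤ) : ℝ) = 3 := by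
    rw [hs.sum_eq, Fintype.card_fin]
    norm_num
  simpa using h

namespace IsRegularSimplex

lemma isEquiangularFamily (hx : IsRegularSimplex x) : IsEquiangularFamily x 1 (-1 / 10) where
  inner_self i := by rw [real_inner_self_eq_norm_sq, hx.1, one_pow]
  inner_of_ne i j hij := hx.2 i j hij

lemma ext_inner (hx : IsRegularSimplex x) {z : EuclideanSpace ℝ (Fin 10)}
    (h : ∀ i, ⟪x i, y⟫ = ⟪x i, z⟫) : y = z :=
  hx.isEquiangularFamily.ext_inner (by norm_num) (by simp) h

lemma inner_simplexVector (hx : IsRegularSimplex x) (hs : HasSignCounts s 2 3) (i : Fin 11) :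
    ⟪x i, simplexVector x s⟫ = signAngle (s i) := by
  rw [simplexVector, real_inner_smul_right, hx.isEquiangularFamily.inner_sum_smul,
    if_pos (Finset.mem_univ i), hs.sum_eq_three, signAngle]
  ring

lemma inner_simplexVector_simplexVector (hx : IsRegularSimplex x) (hs : HasSignCounts s 2 3)
    (ht : HasSignCounts t 2 3) :
    ⟪simplexVector x s, simplexVector x t⟫ = 11 / 90 * (∑ i, (s i : ℤ) * t i : ℤ) - 1 / 10 := by
  rw [simplexVector, simplexVector, real_inner_smul_left, real_inner_smul_right,
    hx.isEquiangularFamily.inner_sum_smul_sum_smul, hs.sum_eq_three, ht.sum_eq_three]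
  push_cast
  ring

lemma norm_simplexVector (hx : IsRegularSimplex x) (hs : HasSignCounts s 2 3) :
    ‖simplexVector x s‖ = 1 := by
  rw [← sq_eq_sq₀ (norm_nonneg _) zero_le_one, ← real_inner_self_eq_norm_sq,
    hx.inner_simplexVector_simplexVector hs hs, hs.sum_mul_self, Fintype.card_fin]
  norm_num

lemma injOn_simplexVector (hx : IsRegularSimplex x) :
    Set.InjOn (simplexVector x) {s | HasSignCounts s 2 3} := by
  intro s hs t ht h
  funext i
  rw [← signAngle_injective.eq_iff, ← hx.inner_simplexVector hs, h, hx.inner_simplexVector ht]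

lemma ncard_inner_simplexVector_eq (hx : IsRegularSimplex x) (hs : HasSignCounts s 2 3)
    (σ : SignType) :
    {i | ⟪x i, simplexVector x s⟫ = signAngle σ}.ncard = Finset.card {i | s i = σ} := by
  simp only [hx.inner_simplexVector hs, ncard_setOf_comp_eq signAngle_injective]

lemma exists_simplexVector_eq (hx : IsRegularSimplex x)
    (h₁ : {i | ⟪x i, y⟫ = α1}.ncard = 6) (h₂ : {i | ⟪x i, y⟫ = α2}.ncard = 2)
    (h₃ : {i | ⟪x i, y⟫ = α3}.ncard = 3) : ∃ s, HasSignCounts s 2 3 ∧ simplexVector x s = y := by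
  rw [← signAngle_one] at h₁
  rw [← signAngle_zero] at h₂
  rw [← signAngle_neg_one] at h₃
  have hsum : ∑ σ, {i | ⟪x i, y⟫ = signAngle σ}.ncard = Fintype.card (Fin 11) := by
    rw [SignType.univ_eq, Finset.sum_insert (by decide), Finset.sum_pair (by decide), h₁, h₂, h₃]
    rfl
  obtain ⟨s, hs⟩ := exists_comp_eq_of_sum_ncard_eq signAngle_injective hsum
  have hy (i : Fin 11) : ⟪x i, y⟫ = signAngle (s i) := (congrFun hs i).symm
  simp only [hy, ncard_setOf_comp_eq signAngle_injective] at h₂ h₃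
  exact ⟨s, ⟨h₂, h₃⟩, hx.ext_inner fun i => by rw [hx.inner_simplexVector ⟨h₂, h₃⟩, hy]⟩

lemma exists_simplexVector_cons_zero_eq (hx : IsRegularSimplex x) (hy : y ∈ Y1set x) :
    ∃ r, HasSignCounts r 1 3 ∧ simplexVector x (Fin.cons 0 r) = y := by
  obtain ⟨-, h₀, h₁, h₂, h₃⟩ := hy
  have hrest {a : ℝ} (ha : a ≠ α2) : {i | i ≠ 0 ∧ ⟪x i, y⟫ = a} = {i | ⟪x i, y⟫ = a} := by
    ext i
    simp only [Set.mem_ofPred_eq, and_iff_right_iff_imp]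
    rintro hi rfl
    exact ha (hi.symm.trans h₀)
  have hinsert : {i | ⟪x i, y⟫ = α2} = insert 0 {i | i ≠ 0 ∧ ⟪x i, y⟫ = α2} := by
    ext i
    rcases eq_or_ne i 0 with rfl | hi <;> simp_all
  rw [hrest (by norm_num [α1, α2])] at h₁
  rw [hrest (by norm_num [α2, α3])] at h₃
  have h₂' : {i | ⟪x i, y⟫ = α2}.ncard = 2 := by
    rw [hinsert, Set.ncard_insert_of_notMem (by simp), h₂]
  obtain ⟨s, hs, rfl⟩ := hx.exists_simplexVector_eq h₁ h₂' h₃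
  have hs₀ : s 0 = 0 := by
    rw [← signAngle_injective.eq_iff, ← hx.inner_simplexVector hs, h₀, signAngle_zero]
  obtain ⟨r, rfl⟩ : ∃ r, s = Fin.cons 0 r := ⟨Fin.tail s, by rw [← hs₀, Fin.cons_self_tail]⟩
  exact ⟨r, hasSignCounts_cons_zero.1 hs, rfl⟩

lemma inner_simplexVector_cons_zero (hx : IsRegularSimplex x) (hs : HasSignCounts s 2 3)
    {r : Fin 10 → SignType} (hr : HasSignCounts r 1 3) :
    ⟪simplexVector x s, simplexVector x (Fin.cons 0 r)⟫ =
      11 / 90 * (∑ j, (Fin.tail s j : ℤ) * r j : ℤ) - 1 / 10 := by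
  rw [hx.inner_simplexVector_simplexVector hs (hasSignCounts_cons_zero.2 hr), Fin.sum_univ_succ]
  simp [Fin.tail]

lemma exists_image_eq_of_isClique10 (hx : IsRegularSimplex x)
    {C : Set (EuclideanSpace ℝ (Fin 10))} (hC : IsClique10 x C) :
    ∃ D : Set (Fin 10 → SignType), (∀ r ∈ D, HasSignCounts r 1 3) ∧
      D.Pairwise (fun r r' => ∑ j, (r j : ℤ) * r' j = 0) ∧ D.ncard = 10 ∧
        (fun r => simplexVector x (Fin.cons 0 r)) '' D = C := by
  obtain ⟨hsub, hcard, hadj⟩ := hC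
  let D : Set (Fin 10 → SignType) := {r | HasSignCounts r 1 3 ∧ simplexVector x (Fin.cons 0 r) ∈ C}
  have hinj : Set.InjOn (fun r => simplexVector x (Fin.cons 0 r)) D := fun r hr r' hr' h =>
    Fin.cons_right_injective _ <| hx.injOn_simplexVector (hasSignCounts_cons_zero.2 hr.1)
      (hasSignCounts_cons_zero.2 hr'.1) h
  have himage : (fun r => simplexVector x (Fin.cons 0 r)) '' D = C := by
    refine Set.Subset.antisymm (Set.image_subset_iff.2 fun r hr => hr.2) fun y hy => ?_
    obtain ⟨r, hr, rfl⟩ := hx.exists_simplexVector_cons_zero_eq (hsub hy)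
    exact ⟨r, ⟨hr, hy⟩, rfl⟩
  refine ⟨D, fun r hr => hr.1, fun r hr r' hr' hne => ?_, ?_, himage⟩
  · have h := hadj _ hr.2 _ hr'.2 (hinj.ne hr hr' hne)
    rw [hx.inner_simplexVector_cons_zero (hasSignCounts_cons_zero.2 hr.1) hr'.1, α2,
      Fin.tail_cons] at h
    have h0 : ((∑ j, (r j : ℤ) * r' j : ℤ) : ℝ) = 0 := by linarith
    exact_mod_cast h0
  · rw [← hinj.ncard_image, himage, hcard]

lemma inner_mem_angles_iff (hx : IsRegularSimplex x) (hs : HasSignCounts s 2 3)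
    {r : Fin 10 → SignType} (hr : HasSignCounts r 1 3) :
    ⟪simplexVector x s, simplexVector x (Fin.cons 0 r)⟫ ∈ ({α1, α2, α3} : Set ℝ) ↔
      ∑ j, (Fin.tail s j : ℤ) * r j ∈ ({3, 0, -3} : Set ℤ) := by
  rw [hx.inner_simplexVector_cons_zero hs hr]
  generalize ∑ j, (Fin.tail s j : ℤ) * r j = m
  have hiff (k : ℤ) {α : ℝ} (hα : 11 / 90 * (k : ℝ) - 1 / 10 = α) :
      11 / 90 * (m : ℝ) - 1 / 10 = α ↔ m = k := by
    rw [← hα, ← Int.cast_inj (α := ℝ)]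
    constructor <;> intro h <;> linarith
  simp only [Set.mem_insert_iff, Set.mem_singleton_iff, hiff 3 (α := α1) (by norm_num [α1]),
    hiff 0 (α := α2) (by norm_num [α2]), hiff (-3) (α := α3) (by norm_num [α3])]

lemma Zset_eq_image (hx : IsRegularSimplex x) (hD : ∀ r ∈ D, HasSignCounts r 1 3) :
    Zset x ((fun r => simplexVector x (Fin.cons 0 r)) '' D) =
      simplexVector x '' {s | HasSignCounts s 2 3 ∧ IsAdmissible D (Fin.tail s)} := by
  have hadm {s : Fin 11 → SignType} (hs : HasSignCounts s 2 3) :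
      (∀ w ∈ (fun r => simplexVector x (Fin.cons 0 r)) '' D,
        ⟪simplexVector x s, w⟫ ∈ ({α1, α2, α3} : Set ℝ)) ↔ IsAdmissible D (Fin.tail s) := by
    rw [Set.forall_mem_image]
    exact forall₂_congr fun r hr => hx.inner_mem_angles_iff hs (hD r hr)
  ext u
  constructor
  · rintro ⟨⟨-, -, h₁, h₂, h₃⟩, hu⟩
    obtain ⟨s, hs, rfl⟩ := hx.exists_simplexVector_eq h₁ h₂ h₃
    exact ⟨s, ⟨hs, (hadm hs).1 hu⟩, rfl⟩
  · rintro ⟨s, ⟨hs, hsD⟩, rfl⟩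
    refine ⟨⟨hx.norm_simplexVector hs, fun hmem => ?_, ?_⟩, (hadm hs).2 hsD⟩
    · have h := (hadm hs).2 hsD _ hmem
      rw [real_inner_self_eq_norm_sq, hx.norm_simplexVector hs] at h
      norm_num [α1, α2, α3] at h
    · have h₁ := hs.card_eq_one
      rw [← signAngle_one, ← signAngle_zero, ← signAngle_neg_one]
      simp only [hx.ncard_inner_simplexVector_eq hs, hs.1, hs.2, Fintype.card_fin] at h₁ ⊢
      lia

end IsRegularSimplex

end Angles

/-- The set `Z` has exactly 90 elements. -/
theorem card_Zset_eq (x : Fin 11 → EuclideanSpace ℝ (Fin 10))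
    (hx : IsRegularSimplex x)
    (C2 : Set (EuclideanSpace ℝ (Fin 10))) (hC2 : IsClique10 x C2) :
    (Zset x C2).ncard = 90 := by
  obtain ⟨D, hD, horth, hcard, rfl⟩ := hx.exists_image_eq_of_isClique10 hC2
  have hinj : Set.InjOn (simplexVector x)
      {s | HasSignCounts s 2 3 ∧ IsAdmissible D (Fin.tail s)} :=
    hx.injOn_simplexVector.mono fun s hs => hs.1
  rw [hx.Zset_eq_image hD, hinj.ncard_image, ncard_setOf_isAdmissible_tail hD horth hcard]
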